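/- Let R_s > 0 and define, for x ∈ ℝ³ ∖ {0}, the matrix entries a_kk(x) := −(1 − R_s/|x|)·(R_s x_k²/|x|³ − 2) for k = 1,2,3 and a_kℓ(x) := a_ℓk(x) := −(1 − R_s/|x|)·R_s x_k x_ℓ/|x|³ for k ≠ ℓ. Then for every x ∈ ℝ³ with |x| > R_s and every nonzero ξ ∈ ℝ³: ∑_{i,j=1}^{3} a_{ij}(x) ξ_i ξ_j > 0, i.e. the symmetric matrix (a_ij(x)) is positive definite on the exterior region {|x| > R_s}. -/

import Mathlib

/-!
With `r = ‖x‖`, the coefficient matrix is `(1 - Rs / r) • (2 • 1 - (Rs / r ^ 3) • x xᵀ)`. For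
`r > Rs` the scalar factor is positive. The other factor is a rank-one perturbation of `2 • 1`, with
eigenvalue `2` on the orthogonal complement of `x` and `2 - Rs / r > 1` in the radial direction.
-/

/-- The second-order coefficients of the operator `A_{3/2}` obtained from the spatial
Klein–Gordon operator by the Liouville transform. -/
noncomputable def amat (Rs : ℝ) (i j : Fin 3) (x : EuclideanSpace ℝ (Fin 3)) : ℝ :=
  if i = j then -(1 - Rs / ‖x‖) * (Rs * x i ^ 2 / ‖x‖ ^ 3 - 2)
  else -(1 - Rs / ‖x‖) * (Rs * x i * x j / ‖x‖ ^ 3)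

open scoped RealInnerProductSpace

lemma mul_inner_sq_lt_mul_norm_sq {E : Type*} [NormedAddCommGroup E] [InnerProductSpace ℝ E]
    {b c : ℝ} {x y : E} (hb : 0 < b) (hc : c * ‖x‖ ^ 2 < b) (hy : y ≠ 0) :
    c * ⟪x, y⟫ ^ 2 < b * ‖y‖ ^ 2 := by
  have hy_sq : 0 < ‖y‖ ^ 2 := pow_pos (norm_pos_iff.2 hy) 2
  rcases le_total c 0 with hc_nonpos | hc_nonneg
  · calc
      c * ⟪x, y⟫ ^ 2 ≤ 0 := mul_nonpos_of_nonpos_of_nonneg hc_nonpos (sq_nonneg _)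
      _ < b * ‖y‖ ^ 2 := mul_pos hb hy_sq
  · have cauchy_schwarz : ⟪x, y⟫ ^ 2 ≤ (‖x‖ * ‖y‖) ^ 2 :=
      sq_le_sq' (neg_le_of_abs_le (abs_real_inner_le_norm x y)) (real_inner_le_norm x y)
    calc
      c * ⟪x, y⟫ ^ 2 ≤ c * (‖x‖ * ‖y‖) ^ 2 := mul_le_mul_of_nonneg_left cauchy_schwarz hc_nonneg
      _ = c * ‖x‖ ^ 2 * ‖y‖ ^ 2 := by ring
      _ < b * ‖y‖ ^ 2 := mul_lt_mul_of_pos_right hc hy_sq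

section FiniteDimensional

variable {ι : Type*} [Fintype ι]

lemma sum_sum_mul_mul_eq_inner_sq (x ξ : EuclideanSpace ℝ ι) :
    ∑ i, ∑ j, x i * x j * (ξ i * ξ j) = ⟪x, ξ⟫ ^ 2 := by
  simp only [PiLp.inner_apply, RCLike.inner_apply, conj_trivial, sq, Finset.sum_mul_sum]
  exact Finset.sum_congr rfl fun i _ ↦ Finset.sum_congr rfl fun j _ ↦ by ring

variable [DecidableEq ι]

lemma sum_sum_one_mul_eq_norm_sq (ξ : EuclideanSpace ℝ ι) :
    ∑ i, ∑ j, (1 : Matrix ι ι ℝ) i j * (ξ i * ξ j) = ‖ξ‖ ^ 2 := by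
  rw [EuclideanSpace.real_norm_sq_eq]
  simp only [Matrix.one_apply, ite_mul, one_mul, zero_mul, Finset.sum_ite_eq, Finset.mem_univ,
    if_true, sq]

/-- The coefficients `amat` in an arbitrary finite dimension, with the indices in any finite type;
`amat` is the case `ι = Fin 3`, by definitional unfolding. -/
noncomputable def liouvilleCoeff (Rs : ℝ) (i j : ι) (x : EuclideanSpace ℝ ι) : ℝ :=
  if i = j then -(1 - Rs / ‖x‖) * (Rs * x i ^ 2 / ‖x‖ ^ 3 - 2)
  else -(1 - Rs / ‖x‖) * (Rs * x i * x j / ‖x‖ ^ 3)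

lemma liouvilleCoeff_eq_mul_sub (Rs : ℝ) (i j : ι) (x : EuclideanSpace ℝ ι) :
    liouvilleCoeff Rs i j x =
      (1 - Rs / ‖x‖) * (2 * (1 : Matrix ι ι ℝ) i j - Rs / ‖x‖ ^ 3 * (x i * x j)) := by
  by_cases hij : i = j
  · subst hij
    rw [liouvilleCoeff, if_pos rfl, Matrix.one_apply_eq]
    ring
  · rw [liouvilleCoeff, if_neg hij, Matrix.one_apply_ne hij]
    ring

lemma sum_sum_liouvilleCoeff_mul (Rs : ℝ) (x ξ : EuclideanSpace ℝ ι) :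
    ∑ i, ∑ j, liouvilleCoeff Rs i j x * ξ i * ξ j =
      (1 - Rs / ‖x‖) * (2 * ‖ξ‖ ^ 2 - Rs / ‖x‖ ^ 3 * ⟪x, ξ⟫ ^ 2) := by
  simp only [← sum_sum_one_mul_eq_norm_sq, ← sum_sum_mul_mul_eq_inner_sq, Finset.mul_sum,
    ← Finset.sum_sub_distrib]
  refine Finset.sum_congr rfl fun i _ ↦ Finset.sum_congr rfl fun j _ ↦ ?_
  rw [liouvilleCoeff_eq_mul_sub]
  ring

theorem amat_positive_definite_general {Rs : ℝ} {x ξ : EuclideanSpace ℝ ι} (hx₀ : x ≠ 0)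
    (hx : Rs < ‖x‖) (hξ : ξ ≠ 0) :
    0 < ∑ i, ∑ j, liouvilleCoeff Rs i j x * ξ i * ξ j := by
  have hr : 0 < ‖x‖ := norm_pos_iff.2 hx₀
  have hq : Rs / ‖x‖ < 1 := (div_lt_one hr).2 hx
  have radial_lt : Rs / ‖x‖ ^ 3 * ‖x‖ ^ 2 < 2 := calc
    Rs / ‖x‖ ^ 3 * ‖x‖ ^ 2 = Rs / ‖x‖ := by field_simp
    _ < 2 := hq.trans one_lt_two
  rw [sum_sum_liouvilleCoeff_mul]
  exact mul_pos (sub_pos.2 hq) (sub_pos.2 (mul_inner_sq_lt_mul_norm_sq two_pos radial_lt hξ))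

end FiniteDimensional

/-- the symmetric matrix `(a_ij(x))` is positive definite on the exterior
region `{|x| > R_s}`: for `|x| > R_s` and `ξ ≠ 0`, `∑_{i,j} a_ij(x) ξ_i ξ_j > 0`. -/
theorem amat_positive_definite (Rs : ℝ) (hRs : 0 < Rs)
    (x ξ : EuclideanSpace ℝ (Fin 3)) (hx : Rs < ‖x‖) (hξ : ξ ≠ 0) :
    0 < ∑ i : Fin 3, ∑ j : Fin 3, amat Rs i j x * ξ i * ξ j :=
  amat_positive_definite_general (norm_pos_iff.1 (hRs.trans hx)) hx hξ
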